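/- Let I ⊆ ℝ be a nondegenerate interval, n ≥ 2, let ω be an n-dimensional positive Chebyshev system over I, and let (t_1,…,t_n) ∈ ℝ₊ⁿ. If, for all pairs (k,i) ∈ {1,…,n−1} × {1,…,n−1}, the function f : I → ℝ is ((t_i𝟏_k, t_{i+1}𝟏_{n−k}), ω)-convex on I, then f is ((t_1,…,t_n), ω)-convex on I. -/

import Mathlib

/-- `Phi ω x` is the determinant `det(ωᵢ(xⱼ))` of an `n`-tuple of functions
evaluated at an `n`-tuple of points. -/
noncomputable def Phi {n : ℕ} (ω : Fin n → ℝ → ℝ) (x : Fin n → ℝ) : ℝ :=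
  (Matrix.of fun i j => ω i (x j)).det

/-- `ω` is an `n`-dimensional positive Chebyshev system over `H`:
`Phi ω` is positive on all strictly increasing `n`-tuples of elements of `H`. -/
def IsPosChebyshev {n : ℕ} (ω : Fin n → ℝ → ℝ) (H : Set ℝ) : Prop :=
  ∀ x : Fin n → ℝ, StrictMono x → (∀ j, x j ∈ H) → 0 < Phi ω x

/-- The partial sum `t₁ + ⋯ + tⱼ` (empty for `j = 0`, everything for `j = n`). -/
noncomputable def psum {n : ℕ} (t : Fin n → ℝ) (j : Fin (n + 1)) : ℝ :=
  ∑ i ∈ Finset.univ.filter (fun i : Fin n => (i : ℕ) < (j : ℕ)), t i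

/-- `f` is `(t,ω)`-convex on `J`:
`Φ_{(ω,f)}(x, x+t₁h, x+(t₁+t₂)h, …, x+(t₁+⋯+tₙ)h) ≥ 0`
for all `x ∈ J` and `h > 0` with `x+(t₁+⋯+tₙ)h ∈ J`. -/
def TOmegaConvexOn {n : ℕ} (ω : Fin n → ℝ → ℝ) (t : Fin n → ℝ) (J : Set ℝ) (f : ℝ → ℝ) : Prop :=
  ∀ x ∈ J, ∀ h : ℝ, 0 < h → x + psum t (Fin.last n) * h ∈ J →
    0 ≤ Phi (Fin.snoc ω f) (fun j => x + psum t j * h)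

lemma Phi_snoc_expand {n : ℕ} (ω : Fin n → ℝ → ℝ) (f : ℝ → ℝ) (x : Fin (n + 1) → ℝ) :
    Phi (Fin.snoc ω f : Fin (n + 1) → ℝ → ℝ) x =
      ∑ j : Fin (n + 1), (-1) ^ (n + (j : ℕ)) * f (x j) * Phi ω (fun i => x (j.succAbove i)) := by
  unfold Phi
  rw [Matrix.det_succ_row _ (Fin.last n)]
  refine Finset.sum_congr rfl fun j _ => ?_
  congr 1
  · simp
  · congr 1
    ext a b
    simp [Matrix.submatrix]

lemma Phi_snoc_self {n : ℕ} (ω : Fin n → ℝ → ℝ) (i : Fin n) (x : Fin (n + 1) → ℝ) :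
    Phi (Fin.snoc ω (ω i) : Fin (n + 1) → ℝ → ℝ) x = 0 := by
  unfold Phi
  refine Matrix.det_zero_of_row_eq (i := i.castSucc) (j := Fin.last n) (Fin.castSucc_lt_last i).ne ?_
  ext b
  simp

lemma Phi_snoc_sub {n : ℕ} (ω : Fin n → ℝ → ℝ) (f : ℝ → ℝ) (c : Fin n → ℝ)
    (x : Fin (n + 1) → ℝ) :
    Phi (Fin.snoc ω (fun u => f u - ∑ i, c i * ω i u) : Fin (n + 1) → ℝ → ℝ) x =
      Phi (Fin.snoc ω f : Fin (n + 1) → ℝ → ℝ) x := by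
  have h : ∑ i, c i * Phi (Fin.snoc ω (ω i) : Fin (n + 1) → ℝ → ℝ) x = 0 := by
    simp [Phi_snoc_self]
  rw [← sub_zero (Phi (Fin.snoc ω f : Fin (n + 1) → ℝ → ℝ) x), ← h]
  simp only [Phi_snoc_expand, Finset.mul_sum]
  rw [Finset.sum_comm, ← Finset.sum_sub_distrib]
  refine Finset.sum_congr rfl fun j _ => ?_
  rw [mul_sub, sub_mul, Finset.mul_sum, Finset.sum_mul]
  congr 1
  refine Finset.sum_congr rfl fun i _ => ?_
  ring

lemma exists_interp {n : ℕ} (ω : Fin n → ℝ → ℝ) (f : ℝ → ℝ) (x : Fin n → ℝ)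
    (hx : 0 < Phi ω x) : ∃ c : Fin n → ℝ, ∀ j, f (x j) - ∑ i, c i * ω i (x j) = 0 := by
  set A : Matrix (Fin n) (Fin n) ℝ := Matrix.of fun i j => ω i (x j) with hA
  have hdet : IsUnit A.det := (ne_of_gt hx).isUnit
  refine ⟨Matrix.vecMul (fun j => f (x j)) A⁻¹, fun j => ?_⟩
  have : Matrix.vecMul (Matrix.vecMul (fun j => f (x j)) A⁻¹) A = fun j => f (x j) := by
    rw [Matrix.vecMul_vecMul, Matrix.nonsing_inv_mul _ hdet, Matrix.vecMul_one]
  have h2 := congrFun this j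
  simp only [Matrix.vecMul, dotProduct, hA, Matrix.of_apply] at h2 ⊢
  linarith

/-- Removing an interior point: the determinant is a nonnegative combination of the two
determinants obtained by removing an end point. -/
lemma Phi_interior {n : ℕ} (ω : Fin n → ℝ → ℝ) (f : ℝ → ℝ) (I : Set ℝ)
    (hω : IsPosChebyshev ω I) (z : Fin (n + 2) → ℝ) (hz : StrictMono z) (hzI : ∀ j, z j ∈ I)
    (j : Fin (n + 2)) (hj0 : j ≠ 0) (hjl : j ≠ Fin.last (n + 1))
    (h0 : 0 ≤ Phi (Fin.snoc ω f : Fin (n + 1) → ℝ → ℝ) (fun i => z i.succ))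
    (h1 : 0 ≤ Phi (Fin.snoc ω f : Fin (n + 1) → ℝ → ℝ) (fun i => z i.castSucc)) :
    0 ≤ Phi (Fin.snoc ω f : Fin (n + 1) → ℝ → ℝ) (fun i => z (j.succAbove i)) := by
  have hn : n ≠ 0 := by
    rintro rfl
    rcases j with ⟨j, hj⟩
    simp [Fin.ext_iff] at hj0 hjl
    omega
  have hpos : ∀ e : Fin n → Fin (n + 2), StrictMono e → 0 < Phi ω (fun i => z (e i)) :=
    fun e he => hω _ (hz.comp he) (fun _ => hzI _)
  have hmid := hpos (fun i => i.succ.castSucc) (fun a b h => by simpa using h)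
  obtain ⟨c, hc⟩ := exists_interp ω f _ hmid
  set g : ℝ → ℝ := fun u => f u - ∑ i, c i * ω i u with hg
  have hgz : ∀ k : Fin (n + 2), k ≠ 0 → k ≠ Fin.last (n + 1) → g (z k) = 0 := by
    intro k hk0 hkl
    have : k = (⟨(k : ℕ) - 1, by
      have := k.2
      have h1 : (k : ℕ) ≠ 0 := fun h => hk0 (Fin.ext h)
      have h2 : (k : ℕ) ≠ n + 1 := fun h => hkl (Fin.ext h)
      omega⟩ : Fin n).succ.castSucc := by
      have h1 : (k : ℕ) ≠ 0 := fun h => hk0 (Fin.ext h)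
      ext
      simp
      omega
    rw [this]
    exact hc _
  rw [← Phi_snoc_sub ω f c, Phi_snoc_expand] at h0 h1 ⊢
  -- the two one-term expansions
  have e0 : 0 ≤ g (z (Fin.last (n + 1))) := by
    rw [Finset.sum_eq_single (Fin.last n)] at h0
    · have hp := hpos (fun i => ((Fin.last n).succAbove i).succ) (fun a b h => by simpa using h)
      have hs : ((-1 : ℝ)) ^ (n + ((Fin.last n : Fin (n + 1)) : ℕ)) = 1 := by
        simp [← two_mul, pow_mul]
      rw [hs, one_mul] at h0
      have := nonneg_of_mul_nonneg_left h0 hp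
      simpa [hg] using this
    · intro b _ hb
      have : g (z b.succ) = 0 := hgz _ (Fin.succ_ne_zero b) (fun e => hb (Fin.succ_injective _ e))
      simp only [hg] at this
      simp [this]
    · simp
  have e1 : 0 ≤ (-1) ^ n * g (z 0) := by
    rw [Finset.sum_eq_single 0] at h1
    · have hp := hpos (fun i => ((0 : Fin (n + 1)).succAbove i).castSucc)
        (fun a b h => by simpa using h)
      have := nonneg_of_mul_nonneg_left h1 hp
      simpa [hg] using this
    · intro b _ hb
      have : g (z b.castSucc) = 0 :=
        hgz _ (fun e => hb (Fin.castSucc_injective _ e)) (Fin.castSucc_lt_last b).ne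
      simp only [hg] at this
      simp [this]
    · simp
  refine Finset.sum_nonneg fun b _ => ?_
  have hp := hpos (fun i => j.succAbove (b.succAbove i))
    ((Fin.strictMono_succAbove j).comp (Fin.strictMono_succAbove b))
  refine mul_nonneg ?_ hp.le
  change 0 ≤ (-1) ^ (n + (b : ℕ)) * g (z (j.succAbove b))
  by_cases hb0 : b = 0
  · subst hb0
    have : j.succAbove 0 = 0 := Fin.succAbove_ne_zero_zero hj0
    rw [this]
    simpa using e1
  by_cases hbl : b = Fin.last n
  · subst hbl
    have : j.succAbove (Fin.last n) = Fin.last (n + 1) := Fin.succAbove_ne_last_last hjl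
    rw [this]
    have hs : ((-1 : ℝ)) ^ (n + ((Fin.last n : Fin (n + 1)) : ℕ)) = 1 := by
      simp [← two_mul, pow_mul]
    rw [hs, one_mul]
    exact e0
  · rw [hgz _ (Fin.succAbove_ne_zero hj0 hb0) (Fin.succAbove_ne_last hjl hbl), mul_zero]

lemma Phi_subgrid {n : ℕ} (ω : Fin n → ℝ → ℝ) (f : ℝ → ℝ) (I : Set ℝ)
    (hω : IsPosChebyshev ω I) (y : ℕ → ℝ) (hy : StrictMono y) (M : ℕ)
    (hyI : ∀ p, p ≤ M → y p ∈ I)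
    (hcons : ∀ s, s + n ≤ M →
      0 ≤ Phi (Fin.snoc ω f : Fin (n + 1) → ℝ → ℝ) (fun j => y (s + j))) :
    ∀ (d : ℕ) (p : Fin (n + 1) → ℕ), StrictMono p → p (Fin.last n) ≤ M →
      p (Fin.last n) - p 0 ≤ d →
      0 ≤ Phi (Fin.snoc ω f : Fin (n + 1) → ℝ → ℝ) (fun j => y (p j)) := by
  intro d
  induction d using Nat.strong_induction_on with
  | _ d ih =>
  intro p hp hpM hpd
  by_cases hgap : ∀ i : Fin n, p i.succ ≤ p i.castSucc + 1
  · have hform : ∀ j : Fin (n + 1), p j = p 0 + j := by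
      intro j
      induction j using Fin.induction with
      | zero => simp
      | succ i hi =>
        have h1 := hgap i
        have h2 := hp (Fin.castSucc_lt_succ (i := i))
        simp only [Fin.val_succ, Fin.val_castSucc] at *
        omega
    have := hcons (p 0) (by have := hform (Fin.last n); simp at this; omega)
    simp_rw [← hform] at this
    exact this
  · push Not at hgap
    obtain ⟨i, hi⟩ := hgap
    set j : Fin (n + 2) := i.succ.castSucc with hj
    set z : Fin (n + 2) → ℕ := Fin.insertNth j (p i.castSucc + 1) p with hzdef
    have hzj : z j = p i.castSucc + 1 := by simp [hzdef]
    have hzs : ∀ k, z (j.succAbove k) = p k := by intro k; simp [hzdef]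
    have hj0 : j ≠ 0 := by simp [hj, Fin.ext_iff]
    have hjl : j ≠ Fin.last (n + 1) := (Fin.castSucc_lt_last _).ne
    have hlt : ∀ k : Fin (n + 1), j.succAbove k < j → p k < z j := by
      intro k hk
      rw [Fin.succAbove_lt_iff_castSucc_lt] at hk
      have : k ≤ i.castSucc := by
        simp only [hj, Fin.lt_def, Fin.le_def, Fin.val_castSucc, Fin.val_succ] at hk ⊢
        omega
      have := hp.monotone this
      omega
    have hgt : ∀ k : Fin (n + 1), j < j.succAbove k → z j < p k := by
      intro k hk
      rw [Fin.lt_succAbove_iff_le_castSucc] at hk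
      have : i.succ ≤ k := by
        simp only [hj, Fin.le_def, Fin.val_castSucc, Fin.val_succ] at hk ⊢
        omega
      have := hp.monotone this
      omega
    have hz : StrictMono z := by
      intro a b hab
      rcases Fin.eq_self_or_eq_succAbove j a with rfl | ⟨a, rfl⟩
      · rcases Fin.eq_self_or_eq_succAbove j b with rfl | ⟨b, rfl⟩
        · exact absurd hab (lt_irrefl _)
        · rw [hzs]; exact hgt _ hab
      · rcases Fin.eq_self_or_eq_succAbove j b with rfl | ⟨b, rfl⟩
        · rw [hzs]; exact hlt _ hab
        · rw [hzs, hzs]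
          exact hp ((Fin.strictMono_succAbove j).lt_iff_lt.1 hab)
    have hz0 : z 0 = p 0 := by
      rw [← hzs 0, Fin.succAbove_ne_zero_zero hj0]
    have hzl : z (Fin.last (n + 1)) = p (Fin.last n) := by
      rw [← hzs (Fin.last n), Fin.succAbove_ne_last_last hjl]
    have hzM : ∀ k, z k ≤ M := fun k => (hz.monotone (Fin.le_last k)).trans (hzl ▸ hpM)
    have h01 : z 0 < z (0 : Fin (n + 1)).succ := hz (Fin.succ_pos _)
    have hll : z (Fin.last n).castSucc < z (Fin.last (n + 1)) := hz (Fin.castSucc_lt_last _)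
    have hpos : z 0 < z (Fin.last (n + 1)) := hz (Fin.last_pos)
    have key := Phi_interior ω f I hω (fun k => y (z k)) (hy.comp hz) (fun k => hyI _ (hzM k))
      j hj0 hjl
      (ih (d - 1) (by omega) (fun k => z k.succ) (hz.comp (Fin.strictMono_succ)) (hzM _)
        (by
          have e : z (Fin.last n).succ = p (Fin.last n) := hzl
          simp only [e]; omega))
      (ih (d - 1) (by omega) (fun k => z k.castSucc) (hz.comp (Fin.strictMono_castSucc)) (hzM _)
        (by simp only [Fin.castSucc_zero]; omega))
    simpa only [hzs] using key

lemma psum_eq {n : ℕ} (t : Fin n → ℝ) (T : ℕ → ℝ) (hT : ∀ i : Fin n, T i = t i)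
    (j : Fin (n + 1)) : psum t j = ∑ l ∈ Finset.range j, T l := by
  unfold psum
  refine Finset.sum_bij (fun i _ => (i : ℕ)) ?_ ?_ ?_ ?_
  · intro a ha; simpa using ha
  · intro a _ b _ h; exact Fin.ext h
  · intro b hb
    have := j.2
    simp only [Finset.mem_range] at hb
    exact ⟨⟨b, by omega⟩, by simpa using hb, rfl⟩
  · intro a _; exact (hT a).symm

theorem tOmegaConvex_of_twoBlock_convexities
    (n : ℕ) (hn : 2 ≤ n) (I : Set ℝ) (hI : I.OrdConnected)
    (hne : ∃ a ∈ I, ∃ b ∈ I, a < b)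
    (ω : Fin n → ℝ → ℝ) (hω : IsPosChebyshev ω I)
    (t : Fin n → ℝ) (ht : ∀ i, 0 < t i) (f : ℝ → ℝ)
    (hblocks : ∀ k i : ℕ, 1 ≤ k → k < n → ∀ hi : i + 1 < n,
      TOmegaConvexOn ω
        (fun j : Fin n => if (j : ℕ) < k then t ⟨i, by omega⟩ else t ⟨i + 1, hi⟩) I f) :
    TOmegaConvexOn ω t I f := by
  intro x hx h hh hxI
  obtain ⟨m, rfl⟩ : ∃ m, n = m + 1 := ⟨n - 1, by omega⟩
  have hm : 0 < m := by omega
  have hmR : (0 : ℝ) < m := by exact_mod_cast hm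
  set T : ℕ → ℝ := fun i => if hi : i < m + 1 then t ⟨i, hi⟩ else 1 with hTdef
  have hTt : ∀ i : Fin (m + 1), T i = t i := fun i => dif_pos i.2
  have hTlt : ∀ i (hi : i < m + 1), T i = t ⟨i, hi⟩ := fun i hi => dif_pos hi
  have hTpos : ∀ i, 0 < T i := by
    intro i
    simp only [hTdef]
    split_ifs
    · exact ht _
    · exact one_pos
  set y : ℕ → ℝ := fun p => x + (∑ q ∈ Finset.range p, T (q / m)) * (h / m) with hydef
  have hhm : 0 < h / m := by positivity
  have hymono : StrictMono y := by
    refine strictMono_nat_of_lt_succ fun p => ?_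
    simp only [hydef, Finset.sum_range_succ]
    have := mul_pos (hTpos (p / m)) hhm
    linarith [add_mul (∑ q ∈ Finset.range p, T (q / m)) (T (p / m)) (h / m)]
  have hsum : ∀ j, ∑ q ∈ Finset.range (j * m), T (q / m) = m * ∑ l ∈ Finset.range j, T l := by
    intro j
    induction j with
    | zero => simp
    | succ j ih =>
      rw [Nat.succ_mul, Finset.sum_range_add, ih, Finset.sum_range_succ, mul_add]
      congr 1
      rw [Finset.sum_congr rfl (g := fun _ => T j)]
      · simp
      · intro l hl
        have hl := Finset.mem_range.1 hl
        congr 1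
        rw [mul_comm j m, Nat.mul_add_div hm, Nat.div_eq_of_lt hl, add_zero]
  have hygrid : ∀ j : Fin (m + 1 + 1), y (j * m) = x + psum t j * h := by
    intro j
    simp only [hydef]
    rw [hsum, psum_eq t T hTt]
    field_simp
  have hyM : y ((m + 1) * m) ∈ I := by
    have := hygrid (Fin.last (m + 1))
    rw [Fin.val_last] at this
    rw [this]; exact hxI
  have hy0 : y 0 = x := by simp [hydef]
  have hyI : ∀ p, p ≤ (m + 1) * m → y p ∈ I := by
    intro p hp
    exact hI.out (hy0 ▸ hx) hyM ⟨hymono.monotone (Nat.zero_le _), hymono.monotone hp⟩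
  have hcons : ∀ s, s + (m + 1) ≤ (m + 1) * m →
      0 ≤ Phi (Fin.snoc ω f : Fin (m + 1 + 1) → ℝ → ℝ) (fun j => y (s + j)) := by
    intro s hs
    obtain ⟨i, r, hr, rfl⟩ : ∃ i r, r < m ∧ s = m * i + r :=
      ⟨s / m, s % m, Nat.mod_lt _ hm, (Nat.div_add_mod s m).symm⟩
    have hi : i + 1 < m + 1 := by
      by_contra hcon
      have : m ≤ i := by omega
      have := Nat.mul_le_mul_left m this
      have h2 : (m + 1) * m = m * m + m := by ring
      omega
    have hb := hblocks (m - r) i (by omega) (by omega) hi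
    have hps : ∀ j : Fin (m + 1 + 1), y (m * i + r + j) = y (m * i + r) +
        psum (fun j : Fin (m + 1) => if (j : ℕ) < m - r then t ⟨i, by omega⟩ else t ⟨i + 1, hi⟩) j
          * (h / m) := by
      intro j
      rw [psum_eq _ (fun l => if l < m - r then t ⟨i, by omega⟩ else t ⟨i + 1, hi⟩)
        (fun _ => rfl)]
      simp only [hydef]
      rw [Finset.sum_range_add, add_mul, ← add_assoc x]
      congr 2
      refine Finset.sum_congr rfl fun l hl => ?_
      have hl := Finset.mem_range.1 hl
      have hj := j.2
      rw [add_assoc, Nat.mul_add_div hm]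
      split_ifs with hc
      · rw [Nat.div_eq_of_lt (by omega), add_zero, hTlt]
      · have : (r + l) / m = 1 := by
          rw [Nat.div_eq_iff hm]
          omega
        rw [this, hTlt]
    have hb' := hb (y (m * i + r)) (hyI _ (by omega)) (h / m) hhm (by
      rw [← hps]; exact hyI _ (by simpa using hs))
    simp_rw [← hps] at hb'
    exact hb'
  have := Phi_subgrid ω f I hω y hymono ((m + 1) * m) hyI hcons ((m + 1) * m)
    (fun j => j * m) (fun a b hab => Nat.mul_lt_mul_of_pos_right hab hm) (by simp) (by simp)
  simp_rw [hygrid] at this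
  exact this
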